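/- (Remark 1 and Corollary 3, second part.) In the two-group voting model with μ = 0 and t₁ = 0, for every j ∈ S₂ and every t₂ ∈ ℝ, the expected actual capital increment of member j is the same under both voting rules and equals (1/2)·σ₂·φ(t₂/σ₂): E[X_j·1_{G₁ ∪ G₂}] = E[X_j·1_{G₁ ∩ G₂}] = (1/2)·σ₂·φ(t₂/σ₂). -/

import Mathlib

open MeasureTheory ProbabilityTheory Real Set

/-- Density of the standard normal distribution. -/
noncomputable def stdPdf (y : ℝ) : ℝ := (Real.sqrt (2 * Real.pi))⁻¹ * Real.exp (-(y ^ 2) / 2)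

/-- Cumulative distribution function of the standard normal distribution. -/
noncomputable def stdCdf (y : ℝ) : ℝ := ∫ x in Set.Iic y, stdPdf x

/-!
The mean of group 1 is independent of everything in group 2, so if `p = P(G₁)`, then for `j ∈ S₂`
`E[X_j 1_{G₁ ∩ G₂}] = p E[X_j 1_{G₂}]` and, by inclusion-exclusion,
`E[X_j 1_{G₁ ∪ G₂}] = p E[X_j] + (1 - p) E[X_j 1_{G₂}]`. For `μ = t₁ = 0` symmetry gives `p = 1/2`
and `E[X_j] = 0`, so both increments are `E[X_j 1_{G₂}] / 2`. Finally, permuting the members of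
group 2 preserves the joint law and the group mean `A₂`, so `E[X_j 1_{G₂}] = E[A₂ 1_{G₂}]`, which is
computed by noting that `-v f'(x) = (x - m) f(x)` for the density `f` of `N(m, v)`.
-/

open Filter Finset
open scoped NNReal

section SetIntegral

variable {Ω γ E : Type*} {m mΩ : MeasurableSpace Ω} [MeasurableSpace γ] [NormedAddCommGroup E]
  [NormedSpace ℝ E] {P : Measure Ω}

lemma setIntegral_union_add_inter {s t : Set Ω} {f : Ω → E} (ht : MeasurableSet t)
    (hfs : IntegrableOn f s P) (hft : IntegrableOn f t P) :
    ∫ ω in s ∪ t, f ω ∂P + ∫ ω in s ∩ t, f ω ∂P = ∫ ω in s, f ω ∂P + ∫ ω in t, f ω ∂P := by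
  rw [← integral_add_measure (hfs.union hft) (hfs.mono_set inter_subset_left),
    Measure.restrict_union_add_inter s ht, integral_add_measure hfs hft]

variable {s : Set Ω} {V : Ω → γ} {t : Set γ} {f : γ → E}

lemma setIntegral_inter_preimage_of_indep (hm : m ≤ mΩ)
    (hindep : Indep m (MeasurableSpace.comap V inferInstance) P) (hV : Measurable V)
    (hs : MeasurableSet[m] s) (ht : MeasurableSet t) (hf : StronglyMeasurable f) :
    ∫ ω in s ∩ V ⁻¹' t, f (V ω) ∂P = P.real s • ∫ ω in V ⁻¹' t, f (V ω) ∂P := by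
  rw [← setIntegral_indicator (hV ht), ← integral_indicator (hV ht)]
  exact hindep.setIntegral_eq_smul hm hV.aemeasurable hs (hf.indicator ht).aestronglyMeasurable

lemma setIntegral_union_preimage_of_indep (hm : m ≤ mΩ)
    (hindep : Indep m (MeasurableSpace.comap V inferInstance) P) (hV : Measurable V)
    (hs : MeasurableSet[m] s) (ht : MeasurableSet t) (hf : StronglyMeasurable f)
    (hint : Integrable (f ∘ V) P) :
    ∫ ω in s ∪ V ⁻¹' t, f (V ω) ∂P =
      P.real s • ∫ ω, f (V ω) ∂P + (1 - P.real s) • ∫ ω in V ⁻¹' t, f (V ω) ∂P := by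
  have hunion := setIntegral_union_add_inter (hV ht) (s := s) hint.integrableOn hint.integrableOn
  simp only [Function.comp_apply] at hunion
  rw [setIntegral_inter_preimage_of_indep hm hindep hV hs ht hf,
    hindep.setIntegral_eq_smul hm hV.aemeasurable hs hf.aestronglyMeasurable] at hunion
  rw [eq_sub_of_add_eq hunion, sub_smul, one_smul, add_sub_assoc]

end SetIntegral

lemma measureReal_Ioi_zero_eq_one_half {G : Type*} [AddCommGroup G] [LinearOrder G]
    [IsOrderedAddMonoid G] [TopologicalSpace G] [OrderClosedTopology G] [MeasurableSpace G]
    [OpensMeasurableSpace G] [MeasurableNeg G] (μ : Measure G) [IsProbabilityMeasure μ]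
    [NullSingletonClass μ] [μ.IsNegInvariant] : μ.real (Ioi 0) = 1 / 2 := by
  have hneg : μ.real (Iic 0) = μ.real (Ioi 0) := by
    rw [← measureReal_congr Iio_ae_eq_Iic, measureReal_def, measureReal_def,
      ← Measure.measure_preimage_neg μ (Ioi 0)]
    simp
  have hadd := probReal_add_probReal_compl (μ := μ) (measurableSet_Ioi (a := (0 : G)))
  rw [compl_Ioi, hneg] at hadd
  linarith

lemma integrable_of_hasLaw {Ω E : Type*} {_ : MeasurableSpace Ω} {P : Measure Ω}
    [NormedAddCommGroup E] [MeasurableSpace E] [BorelSpace E] {X : Ω → E} {ν : Measure E}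
    (hX : HasLaw X ν P) (hν : Integrable id ν) : Integrable X P :=
  (hX.identDistrib .id).integrable_iff.2 hν

section Gaussian

variable {m : ℝ} {v : ℝ≥0}

instance isNegInvariant_gaussianReal_zero : (gaussianReal 0 v).IsNegInvariant where
  neg_eq_self := gaussianReal_map_neg.trans (by rw [neg_zero])

lemma hasDerivAt_gaussianPDFReal (m : ℝ) (v : ℝ≥0) (x : ℝ) :
    HasDerivAt (gaussianPDFReal m v) (-((x - m) / v * gaussianPDFReal m v x)) x := by
  have hexponent : HasDerivAt (fun x ↦ -(x - m) ^ 2 / (2 * v)) (-((x - m) / v)) x := by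
    convert! ((((hasDerivAt_id x).sub_const m).pow 2).neg.div_const (2 * (v : ℝ))) using 1
    simp [neg_div, mul_div_mul_left]
  convert! hexponent.exp.const_mul (√(2 * π * v))⁻¹ using 1
  simp only [gaussianPDFReal]
  ring

lemma integrable_gaussianPDFReal_smul {E : Type*} [NormedAddCommGroup E] [NormedSpace ℝ E]
    {f : ℝ → E} (hv : v ≠ 0) (hf : Integrable f (gaussianReal m v)) :
    Integrable fun x ↦ gaussianPDFReal m v x • f x := by
  rw [gaussianReal_of_var_ne_zero m hv, integrable_withDensity_iff_integrable_smul'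
    (measurable_gaussianPDF m v) (ae_of_all _ fun _ ↦ gaussianPDF_lt_top)] at hf
  simpa only [toReal_gaussianPDF] using hf

lemma setIntegral_Ioi_sub_mean_gaussianReal (m : ℝ) (v : ℝ≥0) (t : ℝ) :
    ∫ x in Ioi t, (x - m) ∂gaussianReal m v = v * gaussianPDFReal m v t := by
  obtain rfl | hv := eq_or_ne v 0
  · simp [gaussianReal_zero_var, setIntegral_dirac]
  have hderiv (x : ℝ) : HasDerivAt (fun x ↦ -(v * gaussianPDFReal m v x))
      (gaussianPDFReal m v x * (x - m)) x := by
    convert! ((hasDerivAt_gaussianPDFReal m v x).const_mul (v : ℝ)).neg using 1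
    field_simp
  have hint : Integrable fun x ↦ gaussianPDFReal m v x * (x - m) :=
    integrable_gaussianPDFReal_smul hv (IsGaussian.integrable_fun_id.sub (integrable_const m))
  have hlim : Tendsto (fun x ↦ -(v * gaussianPDFReal m v x)) atTop (nhds 0) :=
    tendsto_zero_of_hasDerivAt_of_integrableOn_Ioi (a := t) (fun x _ ↦ hderiv x)
      hint.integrableOn ((integrable_gaussianPDFReal m v).const_mul _).neg.integrableOn
  calc ∫ x in Ioi t, (x - m) ∂gaussianReal m v
      = ∫ x in Ioi t, gaussianPDFReal m v x * (x - m) := by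
        simp_rw [← integral_indicator measurableSet_Ioi,
          integral_gaussianReal_eq_integral_smul hv, ← indicator_smul, smul_eq_mul]
    _ = v * gaussianPDFReal m v t := by
        rw [integral_Ioi_of_hasDerivAt_of_tendsto' (fun x _ ↦ hderiv x) hint.integrableOn hlim]
        ring

lemma mul_gaussianPDFReal_eq_sqrt_mul_stdPdf (m : ℝ) (v : ℝ≥0) (t : ℝ) :
    v * gaussianPDFReal m v t = √v * stdPdf ((t - m) / √v) := by
  obtain rfl | hv := eq_or_ne v 0
  · simp
  have hv' : (0 : ℝ) < v := by positivity
  have hexponent : -(t - m) ^ 2 / (2 * v) = -((t - m) / √v) ^ 2 / 2 := by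
    rw [div_pow, sq_sqrt hv'.le]
    field_simp
  rw [gaussianPDFReal, stdPdf, sqrt_mul (by positivity), hexponent]
  nth_rw 1 [← mul_self_sqrt hv'.le]
  field_simp

end Gaussian

section Exchangeability

variable {Ω ι E : Type*} {mΩ : MeasurableSpace Ω} {P : Measure Ω} [Countable ι]
  [MeasurableSpace E] {X : ι → Ω → E} {ν : Measure E}

lemma identDistrib_comp_perm (hlaw : ∀ i, HasLaw (X i) ν P) (hindep : iIndepFun X P)
    (τ : Equiv.Perm ι) : IdentDistrib (fun ω i ↦ X i ω) (fun ω i ↦ X (τ i) ω) P P :=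
  .pi (fun i ↦ (hlaw i).identDistrib (hlaw (τ i))) hindep (hindep.precomp τ.injective)

lemma setIntegral_preimage_eq_of_perm_invariant [NormedAddCommGroup E] [NormedSpace ℝ E]
    [OpensMeasurableSpace E] [SecondCountableTopology E] (hlaw : ∀ i, HasLaw (X i) ν P)
    (hindep : iIndepFun X P) {C : Set (ι → E)} (hC : MeasurableSet C)
    (hperm : ∀ (τ : Equiv.Perm ι) (x : ι → E), (fun i ↦ x (τ i)) ∈ C ↔ x ∈ C) (j k : ι) :
    ∫ ω in (fun ω i ↦ X i ω) ⁻¹' C, X j ω ∂P = ∫ ω in (fun ω i ↦ X i ω) ⁻¹' C, X k ω ∂P := by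
  classical
  have hident := identDistrib_comp_perm hlaw hindep (Equiv.swap j k)
  have heval : StronglyMeasurable fun x : ι → E ↦ x j := (measurable_pi_apply j).stronglyMeasurable
  calc ∫ ω in (fun ω i ↦ X i ω) ⁻¹' C, X j ω ∂P
      = ∫ x in C, x j ∂P.map (fun ω i ↦ X i ω) :=
        (setIntegral_map hC heval.aestronglyMeasurable hident.aemeasurable_fst).symm
    _ = ∫ x in C, x j ∂P.map (fun ω i ↦ X (Equiv.swap j k i) ω) := by rw [hident.map_eq]
    _ = ∫ ω in (fun ω i ↦ X (Equiv.swap j k i) ω) ⁻¹' C, X (Equiv.swap j k j) ω ∂P :=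
        setIntegral_map hC heval.aestronglyMeasurable hident.aemeasurable_snd
    _ = ∫ ω in (fun ω i ↦ X i ω) ⁻¹' C, X k ω ∂P := by
        have hpre : (fun ω i ↦ X (Equiv.swap j k i) ω) ⁻¹' C = (fun ω i ↦ X i ω) ⁻¹' C :=
          Set.ext fun ω ↦ hperm (Equiv.swap j k) fun i ↦ X i ω
        rw [hpre, Equiv.swap_apply_left]

end Exchangeability

section SampleMean

variable {Ω ι : Type*} {mΩ : MeasurableSpace Ω} {P : Measure Ω} {X : ι → Ω → ℝ} {S T : Finset ι}
  {j : ι}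

/-- The mean of the random variables `X i` over the finite index set `S`: for a group `S` of voters
with capital increments `X`, this is `A_S`. It is `0` when `S` is empty. -/
noncomputable def sampleMean (X : ι → Ω → ℝ) (S : Finset ι) (ω : Ω) : ℝ :=
  (#S : ℝ)⁻¹ * ∑ i ∈ S, X i ω

lemma measurable_sampleMean (hX : ∀ i ∈ S, Measurable (X i)) : Measurable (sampleMean X S) :=
  (Finset.measurable_fun_sum S hX).const_mul _

lemma card_mul_sampleMean (X : ι → Ω → ℝ) (S : Finset ι) (ω : Ω) :
    #S * sampleMean X S ω = ∑ i ∈ S, X i ω := by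
  obtain rfl | hS := S.eq_empty_or_nonempty
  · simp
  · exact mul_inv_cancel_left₀ (by exact_mod_cast hS.card_ne_zero) _

lemma indepFun_sampleMean_prodMk (hX : ∀ i, Measurable (X i)) (hindep : iIndepFun X P)
    (hST : Disjoint S T) (hj : j ∈ T) :
    IndepFun (sampleMean X S) (fun ω ↦ (sampleMean X T ω, X j ω)) P := by
  have hmean (R : Finset ι) : Measurable fun x : R → ℝ ↦ (#R : ℝ)⁻¹ * ∑ i, x i := by fun_prop
  convert! (hindep.indepFun_finset S T hST hX).comp (hmean S)
    ((hmean T).prodMk (measurable_pi_apply ⟨j, hj⟩)) using 1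
  · ext ω
    simp [sampleMean, Finset.sum_attach S fun i ↦ X i ω]
  · ext ω <;> simp [sampleMean, Finset.sum_attach T fun i ↦ X i ω]

lemma setIntegral_inter_sampleMean_mem (hX : ∀ i, Measurable (X i)) (hindep : iIndepFun X P)
    (hST : Disjoint S T) (hj : j ∈ T) {B C : Set ℝ} (hB : MeasurableSet B)
    (hC : MeasurableSet C) :
    ∫ ω in sampleMean X S ⁻¹' B ∩ sampleMean X T ⁻¹' C, X j ω ∂P =
      P.real (sampleMean X S ⁻¹' B) * ∫ ω in sampleMean X T ⁻¹' C, X j ω ∂P :=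
  setIntegral_inter_preimage_of_indep (measurable_sampleMean fun i _ ↦ hX i).comap_le
    ((IndepFun_iff_Indep _ _ _).1 (indepFun_sampleMean_prodMk hX hindep hST hj))
    ((measurable_sampleMean fun i _ ↦ hX i).prodMk (hX j)) ⟨B, hB, rfl⟩ (measurable_fst hC)
    measurable_snd.stronglyMeasurable

lemma setIntegral_union_sampleMean_mem (hX : ∀ i, Measurable (X i)) (hindep : iIndepFun X P)
    (hST : Disjoint S T) (hj : j ∈ T) (hint : Integrable (X j) P) {B C : Set ℝ}
    (hB : MeasurableSet B) (hC : MeasurableSet C) :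
    ∫ ω in sampleMean X S ⁻¹' B ∪ sampleMean X T ⁻¹' C, X j ω ∂P =
      P.real (sampleMean X S ⁻¹' B) * ∫ ω, X j ω ∂P +
        (1 - P.real (sampleMean X S ⁻¹' B)) * ∫ ω in sampleMean X T ⁻¹' C, X j ω ∂P :=
  setIntegral_union_preimage_of_indep (measurable_sampleMean fun i _ ↦ hX i).comap_le
    ((IndepFun_iff_Indep _ _ _).1 (indepFun_sampleMean_prodMk hX hindep hST hj))
    ((measurable_sampleMean fun i _ ↦ hX i).prodMk (hX j)) ⟨B, hB, rfl⟩ (measurable_fst hC)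
    measurable_snd.stronglyMeasurable hint

lemma setIntegral_sampleMean_mem {ν : Measure ℝ} (hlaw : ∀ i ∈ S, HasLaw (X i) ν P)
    (hindep : iIndepFun (S.restrict X) P) (hν : Integrable id ν) (hj : j ∈ S) {B : Set ℝ}
    (hB : MeasurableSet B) :
    ∫ ω in sampleMean X S ⁻¹' B, X j ω ∂P =
      ∫ ω in sampleMean X S ⁻¹' B, sampleMean X S ω ∂P := by
  have hcongr (i : ι) (hi : i ∈ S) :
      ∫ ω in sampleMean X S ⁻¹' B, X i ω ∂P = ∫ ω in sampleMean X S ⁻¹' B, X j ω ∂P := by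
    have hevent : sampleMean X S ⁻¹' B =
        (fun ω (i : S) ↦ X i ω) ⁻¹' ((fun x ↦ (#S : ℝ)⁻¹ * ∑ i, x i) ⁻¹' B) := by
      ext ω
      simp [sampleMean, Finset.sum_attach S fun i ↦ X i ω]
    rw [hevent]
    exact setIntegral_preimage_eq_of_perm_invariant (X := S.restrict X) (fun i ↦ hlaw i i.2) hindep
      (hB.preimage (by fun_prop))
      (fun τ x ↦ by simp only [Set.mem_preimage, Equiv.sum_comp τ x]) ⟨i, hi⟩ ⟨j, hj⟩
  have hint (i : ι) (hi : i ∈ S) : Integrable (X i) P := integrable_of_hasLaw (hlaw i hi) hν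
  have hcard : (#S : ℝ) ≠ 0 := by exact_mod_cast (card_pos.2 ⟨j, hj⟩).ne'
  refine mul_left_cancel₀ hcard ?_
  simp_rw [← integral_const_mul, card_mul_sampleMean]
  rw [integral_finsetSum S fun i hi ↦ (hint i hi).integrableOn, Finset.sum_congr rfl hcongr]
  simp [integral_const_mul]

lemma hasLaw_sum_gaussianReal {m : ι → ℝ} {v : ι → ℝ≥0}
    (hlaw : ∀ i ∈ S, HasLaw (X i) (gaussianReal (m i) (v i)) P)
    (hindep : iIndepFun (S.restrict X) P) :
    HasLaw (fun ω ↦ ∑ i ∈ S, X i ω) (gaussianReal (∑ i ∈ S, m i) (∑ i ∈ S, v i)) P where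
  aemeasurable := Finset.aemeasurable_fun_sum S fun i hi ↦ (hlaw i hi).aemeasurable
  map_eq := by
    have : IsProbabilityMeasure P := hindep.isProbabilityMeasure
    refine Measure.ext_of_charFun ?_
    ext s
    rw [hindep.charFun_map_fun_finsetSum_eq_prod fun i hi ↦ (hlaw i hi).aemeasurable,
      Finset.prod_apply, charFun_gaussianReal]
    calc ∏ i ∈ S, charFun (P.map (X i)) s
        = ∏ i ∈ S, Complex.exp (s * m i * Complex.I - v i * s ^ 2 / 2) :=
          Finset.prod_congr rfl fun i hi ↦ by rw [(hlaw i hi).map_eq, charFun_gaussianReal]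
      _ = _ := by
          rw [← Complex.exp_sum]
          congr 1
          push_cast
          simp only [Finset.sum_sub_distrib, Finset.mul_sum, Finset.sum_mul, Finset.sum_div]

lemma hasLaw_sampleMean_gaussianReal {m : ℝ} {v : ℝ≥0}
    (hlaw : ∀ i ∈ S, HasLaw (X i) (gaussianReal m v) P)
    (hindep : iIndepFun (S.restrict X) P) (hS : S.Nonempty) :
    HasLaw (sampleMean X S) (gaussianReal m (v / #S)) P := by
  have hcard : (#S : ℝ) ≠ 0 := by exact_mod_cast hS.card_ne_zero
  convert! gaussianReal_const_mul (hasLaw_sum_gaussianReal hlaw hindep) (#S : ℝ)⁻¹ using 2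
  · simp [hcard]
  · ext
    simp only [NNReal.coe_div, NNReal.coe_natCast, inv_pow, sum_const, nsmul_eq_mul,
      NNReal.coe_mul, NNReal.coe_mk]
    field_simp

lemma setIntegral_sub_mean_of_lt_sampleMean {m : ℝ} {v : ℝ≥0}
    (hlaw : ∀ i ∈ S, HasLaw (X i) (gaussianReal m v) P) (hindep : iIndepFun (S.restrict X) P)
    (hj : j ∈ S) (t : ℝ) :
    ∫ ω in sampleMean X S ⁻¹' Ioi t, (X j ω - m) ∂P =
      √(v / #S) * stdPdf ((t - m) / √(v / #S)) := by
  have : IsProbabilityMeasure P := hindep.isProbabilityMeasure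
  have hmean := hasLaw_sampleMean_gaussianReal hlaw hindep ⟨j, hj⟩
  have hXint := integrable_of_hasLaw (hlaw j hj) IsGaussian.integrable_id
  have hAint := integrable_of_hasLaw hmean IsGaussian.integrable_id
  calc ∫ ω in sampleMean X S ⁻¹' Ioi t, (X j ω - m) ∂P
      = ∫ ω in sampleMean X S ⁻¹' Ioi t, (sampleMean X S ω - m) ∂P := by
        rw [integral_sub hXint.integrableOn (integrable_const m).integrableOn,
          integral_sub hAint.integrableOn (integrable_const m).integrableOn,
          setIntegral_sampleMean_mem hlaw hindep IsGaussian.integrable_id hj measurableSet_Ioi]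
    _ = ∫ x in Ioi t, (x - m) ∂gaussianReal m (v / #S) := by
        rw [← hmean.map_eq, setIntegral_map measurableSet_Ioi (by fun_prop) hmean.aemeasurable]
    _ = √(v / #S) * stdPdf ((t - m) / √(v / #S)) := by
        rw [setIntegral_Ioi_sub_mean_gaussianReal, mul_gaussianPDFReal_eq_sqrt_mul_stdPdf]
        push_cast
        rfl

lemma measureReal_sampleMean_pos_eq_one_half {v : ℝ≥0} (hv : v ≠ 0)
    (hlaw : ∀ i ∈ S, HasLaw (X i) (gaussianReal 0 v) P) (hindep : iIndepFun (S.restrict X) P)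
    (hS : S.Nonempty) : P.real (sampleMean X S ⁻¹' Ioi 0) = 1 / 2 := by
  have hmean := hasLaw_sampleMean_gaussianReal hlaw hindep hS
  have hvar : v / #S ≠ 0 := div_ne_zero hv (by exact_mod_cast hS.card_ne_zero)
  have := nullSingletonClass_gaussianReal (μ := 0) hvar
  rw [← map_measureReal_apply_of_aemeasurable hmean.aemeasurable measurableSet_Ioi, hmean.map_eq,
    measureReal_Ioi_zero_eq_one_half]

end SampleMean

/-- Remark 1 and Corollary 3 (second part): with `μ = 0` and `t₁ = 0`, for every `j ∈ S₂`
and every `t₂`, the expected actual capital increment of member `j` is the same under both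
voting rules and equals `(1/2)·σ₂·φ(t₂/σ₂)`. -/
theorem group2_increment_eq_under_both_rules
    {Ω ι : Type*} [MeasureSpace Ω] [IsProbabilityMeasure (ℙ : Measure Ω)]
    (σ : ℝ) (hσ : 0 < σ)
    (X : ι → Ω → ℝ) (hmeas : ∀ j, Measurable (X j))
    (hindep : iIndepFun X ℙ)
    (hdist : ∀ j, Measure.map (X j) ℙ = gaussianReal 0 ((σ ^ 2).toNNReal))
    (S₁ S₂ : Finset ι) (hdisj : Disjoint S₁ S₂)
    (g₁ g₂ : ℕ) (hcard₁ : S₁.card = g₁) (hcard₂ : S₂.card = g₂)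
    (hg₁ : 1 ≤ g₁) (hg₂ : 1 ≤ g₂)
    (t₂ : ℝ)
    (A₁ A₂ : Ω → ℝ)
    (hA₁ : A₁ = fun ω => (g₁ : ℝ)⁻¹ * ∑ j ∈ S₁, X j ω)
    (hA₂ : A₂ = fun ω => (g₂ : ℝ)⁻¹ * ∑ j ∈ S₂, X j ω)
    :
    ∀ j ∈ S₂,
      (∫ ω in {ω | 0 < A₁ ω} ∪ {ω | t₂ < A₂ ω}, X j ω) =
        (∫ ω in {ω | 0 < A₁ ω} ∩ {ω | t₂ < A₂ ω}, X j ω) ∧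
      (∫ ω in {ω | 0 < A₁ ω} ∩ {ω | t₂ < A₂ ω}, X j ω) =
        (1 / 2) * (σ / Real.sqrt g₂) * stdPdf (t₂ / (σ / Real.sqrt g₂)) := by
  intro j hj
  subst hcard₁ hcard₂ hA₁ hA₂
  have hlaw (i : ι) : HasLaw (X i) (gaussianReal 0 (σ ^ 2).toNNReal) ℙ :=
    ⟨(hmeas i).aemeasurable, hdist i⟩
  have hint := integrable_of_hasLaw (hlaw j) IsGaussian.integrable_id
  have hmean : ∫ ω, X j ω = 0 := (hlaw j).integral_eq.trans integral_id_gaussianReal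
  have hhalf : (ℙ : Measure Ω).real (sampleMean X S₁ ⁻¹' Ioi 0) = 1 / 2 :=
    measureReal_sampleMean_pos_eq_one_half (by simpa using hσ.ne')
      (fun i _ ↦ hlaw i) (hindep.restrict S₁) (card_pos.1 hg₁)
  have hinter := setIntegral_inter_sampleMean_mem hmeas hindep hdisj hj
    (measurableSet_Ioi (a := 0)) (measurableSet_Ioi (a := t₂))
  have hunion := setIntegral_union_sampleMean_mem hmeas hindep hdisj hj hint
    (measurableSet_Ioi (a := 0)) (measurableSet_Ioi (a := t₂))
  have htail := setIntegral_sub_mean_of_lt_sampleMean (fun i _ ↦ hlaw i) (hindep.restrict S₂) hj t₂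
  simp only [sub_zero, coe_toNNReal _ (sq_nonneg σ), sqrt_div (sq_nonneg σ), sqrt_sq hσ.le] at htail
  rw [hhalf, htail] at hinter
  rw [hhalf, hmean, htail] at hunion
  exact ⟨(hunion.trans (by ring)).trans hinter.symm, hinter.trans (by ring)⟩
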